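/- For every integer l ≥ 1 there exists a₀ ∈ (0,1) such that for every a ∈ (a₀,1) the following holds: if μ > 0 is such that the Neumann problem ψ''(r) + ψ'(r)/r + μψ(r) = 0 on (a,1) with ψ'(a) = ψ'(1) = 0 has a nonconstant C² solution with exactly two zeros in (a,1), and λ > 0 is such that the Dirichlet problem φ''(r) + φ'(r)/r − l²φ(r)/r² + λφ(r) = 0 on (a,1) with φ(a) = φ(1) = 0 has a C² solution which is positive on (a,1), then μ > λ. (That is, μ_{0,2}(a) > λ_{l,0}(a) whenever a is sufficiently close to 1.) -/

import Mathlib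

open Set Real


/-- `μ` is the second nontrivial radial Neumann eigenvalue of the annulus
`{a < |x| < 1}`: the radial Neumann problem has a nonconstant `C²` solution with exactly
two zeros in `(a,1)`. -/
def NeumannMu02 (a μ : ℝ) : Prop :=
  ∃ ψ : ℝ → ℝ, ContDiffOn ℝ 2 ψ (Set.Icc a 1) ∧
    (∀ r ∈ Set.Ioo a 1, deriv (deriv ψ) r + deriv ψ r / r + μ * ψ r = 0) ∧
    derivWithin ψ (Set.Icc a 1) a = 0 ∧ derivWithin ψ (Set.Icc a 1) 1 = 0 ∧
    (∃ r ∈ Set.Icc a 1, ψ r ≠ ψ a) ∧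
    {r ∈ Set.Ioo a 1 | ψ r = 0}.encard = 2

/-- `μ` is the first `l`-mode Dirichlet eigenvalue of the annulus `{a < |x| < 1}`:
the `l`-mode Dirichlet problem has a `C²` solution positive on `(a,1)`. -/
def DirichletLam0 (a μ : ℝ) (l : ℕ) : Prop :=
  ∃ φ : ℝ → ℝ, ContDiffOn ℝ 2 φ (Set.Icc a 1) ∧
    (∀ r ∈ Set.Ioo a 1, deriv (deriv φ) r + deriv φ r / r
      - (l:ℝ)^2 * φ r / r^2 + μ * φ r = 0) ∧
    φ a = 0 ∧ φ 1 = 0 ∧ (∀ r ∈ Set.Ioo a 1, 0 < φ r)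

lemma c2_facts {a : ℝ} (ha : a < 1) {ψ : ℝ → ℝ} (h : ContDiffOn ℝ 2 ψ (Set.Icc a 1)) :
    ContinuousOn (derivWithin ψ (Set.Icc a 1)) (Set.Icc a 1) ∧
    ∀ r ∈ Set.Ioo a 1, deriv ψ r = derivWithin ψ (Set.Icc a 1) r ∧
      HasDerivAt ψ (derivWithin ψ (Set.Icc a 1) r) r ∧
      HasDerivAt (derivWithin ψ (Set.Icc a 1)) (deriv (deriv ψ) r) r := by
  have hu : UniqueDiffOn ℝ (Set.Icc a 1) := uniqueDiffOn_Icc ha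
  have key : ∀ r ∈ Set.Ioo a 1, deriv ψ r = derivWithin ψ (Set.Icc a 1) r := fun r hr =>
    (derivWithin_of_mem_nhds (Icc_mem_nhds hr.1 hr.2)).symm
  have h1 : ContDiffOn ℝ 1 (derivWithin ψ (Set.Icc a 1)) (Set.Icc a 1) :=
    h.derivWithin hu (by norm_num)
  refine ⟨h1.continuousOn, fun r hr => ⟨key r hr, ?_, ?_⟩⟩
  · rw [← key r hr]
    exact ((h.contDiffAt (Icc_mem_nhds hr.1 hr.2)).differentiableAt (by norm_num)).hasDerivAt
  · have hd := ((h1.contDiffAt (Icc_mem_nhds hr.1 hr.2)).differentiableAt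
      (by norm_num)).hasDerivAt
    have he : deriv ψ =ᶠ[nhds r] derivWithin ψ (Set.Icc a 1) := by
      filter_upwards [Ioo_mem_nhds hr.1 hr.2] with x hx using key x hx
    rw [he.deriv_eq]
    exact hd

/-- Picone-type identity: the derivative `w` vanishes identically on a short interval. -/
lemma neumann_key {ψ w : ℝ → ℝ} {μ p q : ℝ} (hμ : 0 < μ) (hp : 0 < p) (hpq : p < q)
    (hψc : ContinuousOn ψ (Set.Icc p q)) (hwc : ContinuousOn w (Set.Icc p q))
    (hψ : ∀ r ∈ Set.Ioo p q, HasDerivAt ψ (w r) r)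
    (hw : ∀ r ∈ Set.Ioo p q, HasDerivAt w (-(w r / r) - μ * ψ r) r)
    (hwp : w p = 0) (hwq : w q = 0) (hlen : √μ * (q - p) < π) :
    ∀ r ∈ Set.Ioo p q, w r = 0 := by
  set ω := √μ with hω
  have hωpos : 0 < ω := Real.sqrt_pos.2 hμ
  have hωsq : ω ^ 2 = μ := Real.sq_sqrt hμ.le
  set m := (p + q) / 2 with hm
  have hcos : ∀ r ∈ Set.Icc p q, 0 < Real.cos (ω * (r - m)) := by
    intro r hr
    apply Real.cos_pos_of_mem_Ioo
    have h1 := hr.1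
    have h2 := hr.2
    constructor <;> nlinarith
  set F : ℝ → ℝ := fun r => w r * (-(w r) / 2 - μ * (r * ψ r)
    + ω * (r * w r) * Real.tan (ω * (r - m))) with hF
  have hFc : ContinuousOn F (Set.Icc p q) := by
    have ht : ContinuousOn (fun r => Real.tan (ω * (r - m))) (Set.Icc p q) := by
      intro r hr
      have := (Real.continuousAt_tan.2 (hcos r hr).ne')
      exact (ContinuousAt.comp (f := fun r => ω * (r - m)) this (by fun_prop)).continuousWithinAt
    fun_prop
  have hFd : ∀ r ∈ Set.Ioo p q, ∃ D, HasDerivAt F D r ∧ 0 ≤ D ∧ (D = 0 → w r = 0) := by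
    intro r hr
    have hr0 : 0 < r := hp.trans hr.1
    have hc := hcos r ⟨hr.1.le, hr.2.le⟩
    have hlin : HasDerivAt (fun r => ω * (r - m)) ω r := by
      simpa using ((hasDerivAt_id r).sub_const m).const_mul ω
    have htan : HasDerivAt (fun r => Real.tan (ω * (r - m)))
        (1 / Real.cos (ω * (r - m)) ^ 2 * ω) r :=
      (Real.hasDerivAt_tan hc.ne').comp (h := fun r => ω * (r - m)) r hlin
    have hsec : 1 / Real.cos (ω * (r - m)) ^ 2 = 1 + Real.tan (ω * (r - m)) ^ 2 := by
      rw [Real.tan_eq_sin_div_cos]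
      field_simp
      linarith [Real.sin_sq_add_cos_sq (ω * (r - m))]
    rw [hsec] at htan
    have hW := hw r hr
    have hP := hψ r hr
    have hid := hasDerivAt_id' r
    have hD := hW.mul ((((hW.neg.div_const 2).sub ((hid.mul hP).const_mul μ))).add
      (((hid.mul hW).const_mul ω).mul htan))
    refine ⟨r * (-(w r / r) - μ * ψ r + w r * (1 / (2 * r) + ω * Real.tan (ω * (r - m)))) ^ 2
      + 3 / 4 * w r ^ 2 / r, ?_, by positivity, ?_⟩
    · refine hD.congr_deriv ?_
      simp only [Pi.add_apply, Pi.mul_apply, Pi.sub_apply, Pi.neg_apply]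
      generalize Real.tan (ω * (r - m)) = T
      rw [← hωsq]
      field_simp
      ring
    · intro h
      have h1 : 0 ≤ r * (-(w r / r) - μ * ψ r
        + w r * (1 / (2 * r) + ω * Real.tan (ω * (r - m)))) ^ 2 := by positivity
      have h2 : 0 ≤ 3 / 4 * w r ^ 2 / r := by positivity
      have h3 : 3 / 4 * w r ^ 2 / r = 0 := by linarith
      by_contra hne
      have : 0 < 3 / 4 * w r ^ 2 / r := by positivity
      linarith
  have hmono : MonotoneOn F (Set.Icc p q) := by
    apply monotoneOn_of_deriv_nonneg (convex_Icc p q) hFc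
    · rw [interior_Icc]
      intro r hr
      obtain ⟨D, hD, -⟩ := hFd r hr
      exact hD.differentiableAt.differentiableWithinAt
    · rw [interior_Icc]
      intro r hr
      obtain ⟨D, hD, h0, -⟩ := hFd r hr
      rw [hD.deriv]
      exact h0
  have hFp : F p = 0 := by simp [hF, hwp]
  have hFq : F q = 0 := by simp [hF, hwq]
  have hzero : ∀ r ∈ Set.Icc p q, F r = 0 := by
    intro r hr
    have h1 := hmono (left_mem_Icc.2 hpq.le) hr hr.1
    have h2 := hmono hr (right_mem_Icc.2 hpq.le) hr.2
    linarith
  intro r hr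
  obtain ⟨D, hD, -, h0⟩ := hFd r hr
  apply h0
  have he : F =ᶠ[nhds r] fun _ => (0:ℝ) := by
    filter_upwards [Icc_mem_nhds hr.1 hr.2] with x hx using hzero x hx
  rw [← hD.deriv, he.deriv_eq]
  simp

/-- Upper bound for the first Dirichlet eigenvalue. -/
lemma dirichlet_bound {a lam : ℝ} {l : ℕ} (ha0 : 0 < a) (ha : a < 1)
    (h : DirichletLam0 a lam l) : lam < (π / (1 - a)) ^ 2 + (l:ℝ) ^ 2 / a ^ 2 := by
  obtain ⟨φ, hC, hode, hφa, hφ1, hpos⟩ := h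
  by_contra hcon
  push Not at hcon
  obtain ⟨hwc, hd⟩ := c2_facts ha hC
  set w := derivWithin φ (Set.Icc a 1) with hwdef
  set ω := π / (1 - a) with hω
  have hd0 : 0 < 1 - a := by linarith
  have hωpos : 0 < ω := div_pos Real.pi_pos hd0
  have hω1 : ω * (1 - a) = π := by rw [hω]; field_simp
  have hφc : ContinuousOn φ (Set.Icc a 1) := hC.continuousOn
  set W : ℝ → ℝ := fun r => √r * (w r * Real.sin (ω * (r - a))
    - φ r * (ω * Real.cos (ω * (r - a))) + φ r * Real.sin (ω * (r - a)) / (2 * r)) with hW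
  have hWc : ContinuousOn W (Set.Icc a 1) := by
    have : ∀ r ∈ Set.Icc a 1, 2 * r ≠ 0 := fun r hr => by
      have h0 : 0 < r := ha0.trans_le hr.1
      positivity
    have h1 : ContinuousOn (fun r => φ r * Real.sin (ω * (r - a)) / (2 * r)) (Set.Icc a 1) :=
      ContinuousOn.div (by fun_prop) (by fun_prop) this
    fun_prop
  have hanti : StrictAntiOn W (Set.Icc a 1) := by
    apply strictAntiOn_of_deriv_neg (convex_Icc a 1) hWc
    rw [interior_Icc]
    intro r hr
    have hr0 : 0 < r := ha0.trans hr.1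
    obtain ⟨he, hφd, hwd⟩ := hd r hr
    have hO := hode r hr
    rw [he] at hO
    have hsin : 0 < Real.sin (ω * (r - a)) := by
      apply Real.sin_pos_of_pos_of_lt_pi
      · exact mul_pos hωpos (by linarith [hr.1])
      · rw [← hω1]
        exact mul_lt_mul_of_pos_left (by linarith [hr.2]) hωpos
    have hlin : HasDerivAt (fun r => ω * (r - a)) ω r := by
      simpa using ((hasDerivAt_id r).sub_const a).const_mul ω
    have hS := hlin.sin
    have hK := hlin.cos
    have hid := hasDerivAt_id' r
    have hsq := Real.hasDerivAt_sqrt hr0.ne'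
    have hD := hsq.mul (((hwd.mul hS).sub (hφd.mul (hK.const_mul ω))).add
      ((hφd.mul hS).div (hid.const_mul 2) (by positivity)))
    have hval : HasDerivAt W (√r * (φ r * Real.sin (ω * (r - a)) *
        ((l:ℝ) ^ 2 / r ^ 2 - lam + ω ^ 2 - 1 / (4 * r ^ 2)))) r := by
      refine hD.congr_deriv ?_
      simp only [Pi.add_apply, Pi.mul_apply, Pi.sub_apply, Pi.div_apply]
      have hs : 0 < √r := Real.sqrt_pos.2 hr0
      have hs2 : 1 / (2 * √r) = √r * (1 / (2 * r)) := by
        have := Real.mul_self_sqrt hr0.le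
        field_simp
        nlinarith
      have hdd : deriv (deriv φ) r = - (w r / r) + (l:ℝ) ^ 2 * φ r / r ^ 2 - lam * φ r := by
        linarith
      rw [hs2, hdd]
      generalize Real.sin (ω * (r - a)) = S
      generalize Real.cos (ω * (r - a)) = K
      field_simp
      ring
    rw [hval.deriv]
    have hb : (l:ℝ) ^ 2 / r ^ 2 ≤ (l:ℝ) ^ 2 / a ^ 2 := by
      have := hr.1
      gcongr
    have h4 : 0 < 1 / (4 * r ^ 2) := by positivity
    have hφr := hpos r hr
    have hs : 0 < √r := Real.sqrt_pos.2 hr0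
    have : 0 < φ r * Real.sin (ω * (r - a)) := mul_pos hφr hsin
    exact mul_neg_of_pos_of_neg hs (mul_neg_of_pos_of_neg this (by linarith))
  have h1 := hanti (left_mem_Icc.2 ha.le) (right_mem_Icc.2 ha.le) ha
  have hWa : W a = 0 := by simp [hW, hφa]
  have hW1 : W 1 = 0 := by simp [hW, hφ1, hω1]
  linarith

lemma neumann_bound {a μ : ℝ} (ha0 : 0 < a) (ha : a < 1) (hμ : 0 < μ)
    (h : NeumannMu02 a μ) : 2 * π ≤ √μ * (1 - a) := by
  obtain ⟨ψ, hC, hode, hwa, hw1, -, hcard⟩ := h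
  by_contra hcon
  push Not at hcon
  obtain ⟨hwc, hd⟩ := c2_facts ha hC
  set w := derivWithin ψ (Set.Icc a 1) with hwdef
  have hψc : ContinuousOn ψ (Set.Icc a 1) := hC.continuousOn
  have hs : 0 < √μ := Real.sqrt_pos.2 hμ
  have hfin : ({r ∈ Set.Ioo a 1 | ψ r = 0}).Finite := by
    apply Set.finite_of_encard_eq_coe (k := 2)
    simpa using hcard
  obtain ⟨c, hc, hwcz⟩ : ∃ c ∈ Set.Ioo a 1, w c = 0 := by
    obtain ⟨x, y, hxy, hset⟩ := Set.encard_eq_two.1 hcard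
    have hx : x ∈ {r ∈ Set.Ioo a 1 | ψ r = 0} := by rw [hset]; simp
    have hy : y ∈ {r ∈ Set.Ioo a 1 | ψ r = 0} := by rw [hset]; simp
    have aux : ∀ x y, x < y → x ∈ {r ∈ Set.Ioo a 1 | ψ r = 0} →
        y ∈ {r ∈ Set.Ioo a 1 | ψ r = 0} → ∃ c ∈ Set.Ioo a 1, w c = 0 := by
      intro x y hxy hx hy
      obtain ⟨c, hc, h0⟩ := exists_deriv_eq_zero hxy
        (hψc.mono (Set.Icc_subset_Icc hx.1.1.le hy.1.2.le)) (hx.2.trans hy.2.symm)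
      have hc' : c ∈ Set.Ioo a 1 := ⟨hx.1.1.trans hc.1, hc.2.trans hy.1.2⟩
      exact ⟨c, hc', by rw [← (hd c hc').1, h0]⟩
    rcases lt_or_gt_of_ne hxy with h | h
    · exact aux x y h hx hy
    · exact aux y x h hy hx
  have main : ∀ p q, a ≤ p → p < q → q ≤ 1 → w p = 0 → w q = 0 → √μ * (q - p) < π → False := by
    intro p q hap hpq hq1 hwp hwq hlen
    have hsub : ∀ r ∈ Set.Ioo p q, r ∈ Set.Ioo a 1 := fun r hr =>
      ⟨hap.trans_lt hr.1, hr.2.trans_le hq1⟩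
    have hz := neumann_key hμ (ha0.trans_le hap) hpq (hψc.mono (Set.Icc_subset_Icc hap hq1))
      (hwc.mono (Set.Icc_subset_Icc hap hq1)) (fun r hr => (hd r (hsub r hr)).2.1)
      (fun r hr => by
        obtain ⟨he, -, h2⟩ := hd r (hsub r hr)
        have hO := hode r (hsub r hr)
        rw [he] at hO
        exact h2.congr_deriv (by linarith)) hwp hwq hlen
    have hψz : ∀ r ∈ Set.Ioo p q, ψ r = 0 := by
      intro r hr
      obtain ⟨he, -, h2⟩ := hd r (hsub r hr)
      have hO := hode r (hsub r hr)
      have hev : w =ᶠ[nhds r] fun _ => (0:ℝ) := by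
        filter_upwards [Ioo_mem_nhds hr.1 hr.2] with x hx using hz x hx
      have h0 : deriv (deriv ψ) r = 0 := by
        rw [← h2.deriv, hev.deriv_eq]
        simp
      rw [h0, he, hz r hr] at hO
      simpa [hμ.ne'] using hO
    exact (Set.Ioo_infinite hpq) (hfin.subset fun r hr => ⟨hsub r hr, hψz r hr⟩)
  rcases le_total (c - a) ((1 - a) / 2) with h | h
  · exact main a c le_rfl hc.1 hc.2.le hwa hwcz (by nlinarith)
  · exact main c 1 hc.1.le hc.2 le_rfl hwcz hw1 (by nlinarith)

/-- For each `l ≥ 1`, `μ_{0,2}(a) > λ_{l,0}(a)` whenever `a` is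
sufficiently close to `1`. -/
theorem mu02_gt_laml0_near_one (l : ℕ) (hl : 1 ≤ l) :
    ∃ a₀ ∈ Set.Ioo (0:ℝ) 1, ∀ a ∈ Set.Ioo a₀ 1, ∀ μ > (0:ℝ), ∀ lam > (0:ℝ),
      NeumannMu02 a μ → DirichletLam0 a lam l → lam < μ := by
  have hl1 : (1:ℝ) ≤ l := by exact_mod_cast hl
  have hinv : 1 / (2 * (l:ℝ)) ≤ 1 / 2 := by
    apply one_div_le_one_div_of_le <;> linarith
  have hinv0 : 0 < 1 / (2 * (l:ℝ)) := by positivity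
  refine ⟨1 - 1 / (2 * l), ⟨by linarith, by linarith⟩, ?_⟩
  intro a ha μ hμ lam _ hN hD
  have hah : 1 / 2 < a := by linarith [ha.1]
  have hd0 : 0 < 1 - a := by linarith [ha.2]
  have hld : (l:ℝ) * (1 - a) < 1 / 2 := by
    have h1 : 1 - a < 1 / (2 * (l:ℝ)) := by linarith [ha.1]
    rw [lt_div_iff₀ (by positivity)] at h1
    linarith
  have h1 := dirichlet_bound (by linarith) ha.2 hD
  have h2 := neumann_bound (by linarith) ha.2 hμ hN
  have hpi := Real.pi_gt_three
  have h3 : 4 * (π / (1 - a)) ^ 2 ≤ μ := by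
    have : 2 * (π / (1 - a)) ≤ √μ := by
      rw [← mul_div_assoc, div_le_iff₀ hd0]
      exact h2
    have h5 : (2 * (π / (1 - a))) ^ 2 ≤ √μ ^ 2 := by gcongr
    rw [Real.sq_sqrt hμ.le] at h5
    linarith
  have h4 : (l:ℝ) ^ 2 / a ^ 2 ≤ (π / (1 - a)) ^ 2 := by
    rw [← div_pow]
    have : (l:ℝ) / a ≤ π / (1 - a) := by
      rw [div_le_div_iff₀ (by linarith) hd0]
      nlinarith
    have h0 : 0 ≤ (l:ℝ) / a := by positivity
    gcongr
  have h5 : 0 < (π / (1 - a)) ^ 2 := by positivity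
  linarith
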